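/- Let n ≥ 5 be odd. With t₁, t₂, t₃, t₄ the involutions in Sym(2n) defined by t₁ = ∏_{i=0}^{⌊(n-2)/2⌋}(1+2i,2+2i)(n+1+2i,n+2+2i), t₂ = ∏_{i=1}^{⌊(n-3)/2⌋}(2+2i,3+2i)(n+2+2i,n+3+2i), t₃ = (1,3)(2,4)(n+1,n+3)(n+2,n+4), t₄ = (1,2)(n+1,n+2)∏_{i=1}^{n-2}(2+i,n+2+i), one has (t₁t₂t₃t₄)ⁿ = ∏_{i=1}^{n}(i, n+i). -/

import Mathlib

open Equiv

/-- `t₁ = ∏_{i=0}^{⌊(n-2)/2⌋} (1+2i, 2+2i)(n+1+2i, n+2+2i)` in `Sym(2n)` (as a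
permutation of `ℕ`). -/
def t1 (n : ℕ) : Equiv.Perm ℕ :=
  ((List.range ((n - 2) / 2 + 1)).map
    (fun i => Equiv.swap (1 + 2*i) (2 + 2*i) * Equiv.swap (n+1+2*i) (n+2+2*i))).prod

/-- `t₂ = ∏_{i=1}^{⌊(n-3)/2⌋} (2+2i, 3+2i)(n+2+2i, n+3+2i)`. -/
def t2 (n : ℕ) : Equiv.Perm ℕ :=
  ((List.range ((n - 3) / 2)).map
    (fun j => Equiv.swap (2 + 2*(j+1)) (3 + 2*(j+1)) *
      Equiv.swap (n+2+2*(j+1)) (n+3+2*(j+1)))).prod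

/-- `t₃ = (1,3)(2,4)(n+1,n+3)(n+2,n+4)`. -/
def t3 (n : ℕ) : Equiv.Perm ℕ :=
  Equiv.swap 1 3 * Equiv.swap 2 4 * Equiv.swap (n+1) (n+3) * Equiv.swap (n+2) (n+4)

/-- `t₄ = (1,2)(n+1,n+2) ∏_{i=1}^{n-2} (2+i, n+2+i)`. -/
def t4 (n : ℕ) : Equiv.Perm ℕ :=
  Equiv.swap 1 2 * Equiv.swap (n+1) (n+2) *
    ((List.range (n - 2)).map (fun j => Equiv.swap (2 + (j+1)) (n+2+(j+1)))).prod

theorem p1_apply (q : ℕ) : ∀ m x : ℕ, m ≤ q →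
    (((List.range m).map
      (fun i => Equiv.swap (1 + 2*i) (2 + 2*i) *
        Equiv.swap ((2*q+1)+1+2*i) ((2*q+1)+2+2*i))).prod : Equiv.Perm ℕ) x =
    if 1 ≤ x ∧ x ≤ 2*m then (if x % 2 = 1 then x + 1 else x - 1)
    else if 2*q+2 ≤ x ∧ x ≤ 2*q+1+2*m then (if x % 2 = 0 then x + 1 else x - 1)
    else x := by
  intro m
  induction m with
  | zero =>
    intro x _
    simp only [List.range_zero, List.map_nil, List.prod_nil, Equiv.Perm.one_apply]
    split_ifs <;> omega
  | succ m ih =>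
    intro x hm
    rw [List.range_succ, List.map_append, List.prod_append, Equiv.Perm.mul_apply,
      ih _ (by omega)]
    simp only [List.map_cons, List.map_nil, List.prod_cons, List.prod_nil, mul_one,
      Equiv.Perm.mul_apply, Equiv.swap_apply_def]
    grind

theorem p2_apply (q : ℕ) : ∀ m x : ℕ, m + 1 ≤ q →
    (((List.range m).map
      (fun j => Equiv.swap (2 + 2*(j+1)) (3 + 2*(j+1)) *
        Equiv.swap ((2*q+1)+2+2*(j+1)) ((2*q+1)+3+2*(j+1)))).prod : Equiv.Perm ℕ) x =
    if 4 ≤ x ∧ x ≤ 2*m+3 then (if x % 2 = 0 then x + 1 else x - 1)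
    else if 2*q+5 ≤ x ∧ x ≤ 2*q+1+2*m+3 then (if x % 2 = 1 then x + 1 else x - 1)
    else x := by
  intro m
  induction m with
  | zero =>
    intro x _
    simp only [List.range_zero, List.map_nil, List.prod_nil, Equiv.Perm.one_apply]
    split_ifs <;> omega
  | succ m ih =>
    intro x hm
    rw [List.range_succ, List.map_append, List.prod_append, Equiv.Perm.mul_apply,
      ih _ (by omega)]
    simp only [List.map_cons, List.map_nil, List.prod_cons, List.prod_nil, mul_one,
      Equiv.Perm.mul_apply, Equiv.swap_apply_def]
    grind

theorem p4_apply (n : ℕ) : ∀ m x : ℕ, m + 2 ≤ n →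
    (((List.range m).map (fun j => Equiv.swap (2 + (j+1)) (n+2+(j+1)))).prod : Equiv.Perm ℕ) x =
    if 3 ≤ x ∧ x ≤ m+2 then x + n
    else if n+3 ≤ x ∧ x ≤ n+m+2 then x - n
    else x := by
  intro m
  induction m with
  | zero =>
    intro x _
    simp only [List.range_zero, List.map_nil, List.prod_nil, Equiv.Perm.one_apply]
    split_ifs <;> omega
  | succ m ih =>
    intro x hm
    rw [List.range_succ, List.map_append, List.prod_append, Equiv.Perm.mul_apply,
      ih _ (by omega)]
    simp only [List.map_cons, List.map_nil, List.prod_cons, List.prod_nil, mul_one,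
      Equiv.swap_apply_def]
    grind

theorem pz_apply (n : ℕ) : ∀ m x : ℕ, m ≤ n →
    (((List.range m).map (fun i => Equiv.swap (i+1) (n+(i+1)))).prod : Equiv.Perm ℕ) x =
    if 1 ≤ x ∧ x ≤ m then x + n
    else if n+1 ≤ x ∧ x ≤ n+m then x - n
    else x := by
  intro m
  induction m with
  | zero =>
    intro x _
    simp only [List.range_zero, List.map_nil, List.prod_nil, Equiv.Perm.one_apply]
    split_ifs <;> omega
  | succ m ih =>
    intro x hm
    rw [List.range_succ, List.map_append, List.prod_append, Equiv.Perm.mul_apply,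
      ih _ (by omega)]
    simp only [List.map_cons, List.map_nil, List.prod_cons, List.prod_nil, mul_one,
      Equiv.swap_apply_def]
    grind

/-- The action on `{1,...,n}` modulo the blocks `{i, n+i}`. -/
def baseStep (n i : ℕ) : ℕ :=
  if i = 1 then (if n = 5 then 5 else 6)
  else if i = 2 then 4
  else if i = 3 then 2
  else if i = 4 then 1
  else if i % 2 = 1 then i - 2
  else if i + 1 = n then n
  else i + 2

theorem t1_apply (q x : ℕ) (hq : 2 ≤ q) : t1 (2*q+1) x =
    if 1 ≤ x ∧ x ≤ 2*q then (if x % 2 = 1 then x + 1 else x - 1)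
    else if 2*q+2 ≤ x ∧ x ≤ 2*q+1+2*q then (if x % 2 = 0 then x + 1 else x - 1)
    else x := by
  have e1 : (2*q+1-2)/2+1 = q := by omega
  unfold t1
  rw [e1, p1_apply q _ _ le_rfl]

theorem t2_apply (q x : ℕ) (hq : 2 ≤ q) : t2 (2*q+1) x =
    if 4 ≤ x ∧ x ≤ 2*q+1 then (if x % 2 = 0 then x + 1 else x - 1)
    else if 2*q+5 ≤ x ∧ x ≤ 2*(2*q+1) then (if x % 2 = 1 then x + 1 else x - 1)
    else x := by
  have e2 : (2*q+1-3)/2 = q - 1 := by omega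
  have e3 : 2*(q-1)+3 = 2*q+1 := by omega
  have e4 : 2*q+1+2*(q-1)+3 = 2*(2*q+1) := by omega
  unfold t2
  rw [e2, p2_apply q _ _ (by omega), e3, e4]

theorem t4_apply (q x : ℕ) (hq : 2 ≤ q) : t4 (2*q+1) x =
    if x = 1 then 2 else if x = 2 then 1
    else if x = 2*q+2 then 2*q+3 else if x = 2*q+3 then 2*q+2
    else if 3 ≤ x ∧ x ≤ 2*q+1 then x + (2*q+1)
    else if 2*q+4 ≤ x ∧ x ≤ 2*(2*q+1) then x - (2*q+1)
    else x := by
  unfold t4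
  rw [Equiv.Perm.mul_apply, p4_apply (2*q+1) _ _ (by omega), Equiv.Perm.mul_apply]
  generalize hy : (if 3 ≤ x ∧ x ≤ 2*q+1-2+2 then x + (2*q+1)
    else if 2*q+1+3 ≤ x ∧ x ≤ 2*q+1+(2*q+1-2)+2 then x - (2*q+1)
    else x) = y
  simp only [Equiv.swap_apply_def]
  split_ifs at hy <;> (try simp (disch := omega) only [if_pos, if_neg]) <;> first | omega | (split_ifs <;> omega)

theorem t3_apply (q x : ℕ) (hq : 2 ≤ q) : t3 (2*q+1) x =
    if x = 1 then 3 else if x = 2 then 4 else if x = 3 then 1 else if x = 4 then 2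
    else if x = 2*q+2 then 2*q+4 else if x = 2*q+3 then 2*q+5
    else if x = 2*q+4 then 2*q+2 else if x = 2*q+5 then 2*q+3
    else x := by
  simp only [t3, Equiv.Perm.mul_apply, Equiv.swap_apply_def]
  have hc : x = 1 ∨ x = 2 ∨ x = 3 ∨ x = 4 ∨ x = 2*q+2 ∨ x = 2*q+3 ∨ x = 2*q+4 ∨ x = 2*q+5 ∨
    (x ≠ 1 ∧ x ≠ 2 ∧ x ≠ 3 ∧ x ≠ 4 ∧ x ≠ 2*q+2 ∧ x ≠ 2*q+3 ∧ x ≠ 2*q+4 ∧ x ≠ 2*q+5) := by omega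
  rcases hc with h | h | h | h | h | h | h | h | h <;>
    simp (disch := omega) only [if_pos, if_neg] <;> omega

theorem chain (n i a b c d : ℕ) (h4 : t4 n i = a) (h3 : t3 n a = b) (h2 : t2 n b = c)
    (h1 : t1 n c = d) : (t1 n * t2 n * t3 n * t4 n) i = d := by
  simp only [Equiv.Perm.mul_apply, h4, h3, h2, h1]

theorem g_low (q i : ℕ) (hq : 2 ≤ q) (h1 : 1 ≤ i) (h2 : i ≤ 2*q+1) :
    (t1 (2*q+1) * t2 (2*q+1) * t3 (2*q+1) * t4 (2*q+1)) i =
      if i ≤ 2 then baseStep (2*q+1) i else baseStep (2*q+1) i+(2*q+1) := by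
  have hc : i = 1 ∨ i = 2 ∨ i = 3 ∨ i = 4 ∨ (5 ≤ i ∧ i % 2 = 1) ∨ (5 ≤ i ∧ i % 2 = 0) := by omega
  unfold baseStep
  rcases hc with h | h | h | h | h | h <;> simp (disch := omega) only [if_pos, if_neg]
  · refine chain _ _ (2) (4) (5) _ ?_ ?_ ?_ ?_ <;> simp only [t1_apply q _ hq, t2_apply q _ hq, t3_apply q _ hq, t4_apply q _ hq] <;>
      (try simp (disch := omega) only [if_pos, if_neg]) <;> first | omega | (split_ifs <;> omega)
  · refine chain _ _ (1) (3) (3) _ ?_ ?_ ?_ ?_ <;> simp only [t1_apply q _ hq, t2_apply q _ hq, t3_apply q _ hq, t4_apply q _ hq] <;>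
      (try simp (disch := omega) only [if_pos, if_neg]) <;> first | omega | (split_ifs <;> omega)
  · refine chain _ _ (3+(2*q+1)) (1+(2*q+1)) (1+(2*q+1)) _ ?_ ?_ ?_ ?_ <;> simp only [t1_apply q _ hq, t2_apply q _ hq, t3_apply q _ hq, t4_apply q _ hq] <;>
      (try simp (disch := omega) only [if_pos, if_neg]) <;> first | omega | (split_ifs <;> omega)
  · refine chain _ _ (4+(2*q+1)) (2+(2*q+1)) (2+(2*q+1)) _ ?_ ?_ ?_ ?_ <;> simp only [t1_apply q _ hq, t2_apply q _ hq, t3_apply q _ hq, t4_apply q _ hq] <;>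
      (try simp (disch := omega) only [if_pos, if_neg]) <;> first | omega | (split_ifs <;> omega)
  · refine chain _ _ (i+(2*q+1)) (i+(2*q+1)) (i-1+(2*q+1)) _ ?_ ?_ ?_ ?_ <;> simp only [t1_apply q _ hq, t2_apply q _ hq, t3_apply q _ hq, t4_apply q _ hq] <;>
      (try simp (disch := omega) only [if_pos, if_neg]) <;> first | omega | (split_ifs <;> omega)
  · refine chain _ _ (i+(2*q+1)) (i+(2*q+1)) (i+1+(2*q+1)) _ ?_ ?_ ?_ ?_ <;> simp only [t1_apply q _ hq, t2_apply q _ hq, t3_apply q _ hq, t4_apply q _ hq] <;>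
      (try simp (disch := omega) only [if_pos, if_neg]) <;> first | omega | (split_ifs <;> omega)

theorem g_high (q i : ℕ) (hq : 2 ≤ q) (h1 : 1 ≤ i) (h2 : i ≤ 2*q+1) :
    (t1 (2*q+1) * t2 (2*q+1) * t3 (2*q+1) * t4 (2*q+1)) (i + (2*q+1)) =
      if i ≤ 2 then baseStep (2*q+1) i+(2*q+1) else baseStep (2*q+1) i := by
  have hc : i = 1 ∨ i = 2 ∨ i = 3 ∨ i = 4 ∨ (5 ≤ i ∧ i % 2 = 1) ∨ (5 ≤ i ∧ i % 2 = 0) := by omega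
  unfold baseStep
  rcases hc with h | h | h | h | h | h <;> simp (disch := omega) only [if_pos, if_neg]
  · refine chain _ _ (2+(2*q+1)) (4+(2*q+1)) (5+(2*q+1)) _ ?_ ?_ ?_ ?_ <;> simp only [t1_apply q _ hq, t2_apply q _ hq, t3_apply q _ hq, t4_apply q _ hq] <;>
      (try simp (disch := omega) only [if_pos, if_neg]) <;> first | omega | (split_ifs <;> omega)
  · refine chain _ _ (1+(2*q+1)) (3+(2*q+1)) (3+(2*q+1)) _ ?_ ?_ ?_ ?_ <;> simp only [t1_apply q _ hq, t2_apply q _ hq, t3_apply q _ hq, t4_apply q _ hq] <;>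
      (try simp (disch := omega) only [if_pos, if_neg]) <;> first | omega | (split_ifs <;> omega)
  · refine chain _ _ (3) (1) (1) _ ?_ ?_ ?_ ?_ <;> simp only [t1_apply q _ hq, t2_apply q _ hq, t3_apply q _ hq, t4_apply q _ hq] <;>
      (try simp (disch := omega) only [if_pos, if_neg]) <;> first | omega | (split_ifs <;> omega)
  · refine chain _ _ (4) (2) (2) _ ?_ ?_ ?_ ?_ <;> simp only [t1_apply q _ hq, t2_apply q _ hq, t3_apply q _ hq, t4_apply q _ hq] <;>
      (try simp (disch := omega) only [if_pos, if_neg]) <;> first | omega | (split_ifs <;> omega)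
  · refine chain _ _ (i) (i) (i-1) _ ?_ ?_ ?_ ?_ <;> simp only [t1_apply q _ hq, t2_apply q _ hq, t3_apply q _ hq, t4_apply q _ hq] <;>
      (try simp (disch := omega) only [if_pos, if_neg]) <;> first | omega | (split_ifs <;> omega)
  · refine chain _ _ (i) (i) (i+1) _ ?_ ?_ ?_ ?_ <;> simp only [t1_apply q _ hq, t2_apply q _ hq, t3_apply q _ hq, t4_apply q _ hq] <;>
      (try simp (disch := omega) only [if_pos, if_neg]) <;> first | omega | (split_ifs <;> omega)

theorem g_out (q x : ℕ) (hq : 2 ≤ q) (h : x = 0 ∨ 2*(2*q+1) < x) :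
    (t1 (2*q+1) * t2 (2*q+1) * t3 (2*q+1) * t4 (2*q+1)) x = x := by
  exact chain _ _ x x x x
    (by rw [t4_apply q _ hq]; simp (disch := omega) only [if_pos, if_neg])
    (by rw [t3_apply q _ hq]; simp (disch := omega) only [if_pos, if_neg])
    (by rw [t2_apply q _ hq]; simp (disch := omega) only [if_pos, if_neg])
    (by rw [t1_apply q _ hq]; simp (disch := omega) only [if_pos, if_neg])

theorem baseStep_mem (q i : ℕ) (hq : 2 ≤ q) (h1 : 1 ≤ i) (h2 : i ≤ 2*q+1) :
    1 ≤ baseStep (2*q+1) i ∧ baseStep (2*q+1) i ≤ 2*q+1 := by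
  unfold baseStep
  grind

/-- The `k`-th point of the orbit of `1`, for `k ≤ n = 2q+1`. -/
def orb (q k : ℕ) : ℕ :=
  if k = 0 then 1
  else if k + 2 ≤ q then 4 + 2*k + (if k % 2 = 0 then 2*q+1 else 0)
  else if k + 2 ≤ 2*q then 2*(2*q+1) - 3 - 2*k + (if k % 2 = 0 then 2*q+1 else 0)
  else if k + 1 = 2*q then 2
  else if k = 2*q then 4
  else 2*q+2

theorem orb_step_low (q k y : ℕ) (hq : 2 ≤ q) (hk : k < 2*q+1) (hy : orb q k = y)
    (h : y ≤ 2*q+1) :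
    orb q (k+1) = if y ≤ 2 then baseStep (2*q+1) y else baseStep (2*q+1) y + (2*q+1) := by
  unfold orb at hy ⊢
  unfold baseStep
  split_ifs at hy <;> first
    | omega
    | ((try simp (disch := omega) only [if_pos, if_neg]) <;> first | omega | (split_ifs <;> omega))

theorem orb_step_high (q k y : ℕ) (hq : 2 ≤ q) (hk : k < 2*q+1) (hy : orb q k = y + (2*q+1))
    (h : 1 ≤ y) :
    orb q (k+1) = if y ≤ 2 then baseStep (2*q+1) y + (2*q+1) else baseStep (2*q+1) y := by
  unfold orb at hy ⊢
  unfold baseStep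
  split_ifs at hy <;> first
    | omega
    | ((try simp (disch := omega) only [if_pos, if_neg]) <;> first | omega | (split_ifs <;> omega))

/-- For odd `n ≥ 5`, `(t₁t₂t₃t₄)ⁿ = ∏_{i=1}^{n} (i, n+i)`. -/
theorem t1t2t3t4_pow_n (n : ℕ) (hn : 5 ≤ n) (hodd : Odd n) :
    (t1 n * t2 n * t3 n * t4 n) ^ n =
      ((List.range n).map (fun i => Equiv.swap (i+1) (n+(i+1)))).prod := by
  obtain ⟨q, rfl⟩ := hodd
  have hq : 2 ≤ q := by omega
  have hlow := fun i => g_low q i hq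
  have hhigh := fun i => g_high q i hq
  have hout := fun x => g_out q x hq
  generalize t1 (2*q+1) * t2 (2*q+1) * t3 (2*q+1) * t4 (2*q+1) = g at hlow hhigh hout ⊢
  have hz := fun x => pz_apply (2*q+1) (2*q+1) x le_rfl
  generalize ((List.range (2*q+1)).map
    (fun i => Equiv.swap (i+1) (2*q+1+(i+1)))).prod = z at hz ⊢
  have hzlow : ∀ i, 1 ≤ i → i ≤ 2*q+1 → z i = i + (2*q+1) := by
    intro i h1 h2; rw [hz, if_pos ⟨h1, h2⟩]
  have hzhigh : ∀ i, 1 ≤ i → i ≤ 2*q+1 → z (i + (2*q+1)) = i := by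
    intro i h1 h2; rw [hz, if_neg (by omega), if_pos (by omega)]; omega
  have hzout : ∀ x, (x = 0 ∨ 2*(2*q+1) < x) → z x = x := by
    intro x h; rw [hz, if_neg (by omega), if_neg (by omega)]
  have hcases : ∀ x, (x = 0 ∨ 2*(2*q+1) < x) ∨ (1 ≤ x ∧ x ≤ 2*q+1) ∨
      ∃ i, 1 ≤ i ∧ i ≤ 2*q+1 ∧ x = i + (2*q+1) := by
    intro x
    by_cases h : x ≤ 2*q+1
    · omega
    · by_cases h' : 2*(2*q+1) < x
      · omega
      · exact Or.inr (Or.inr ⟨x - (2*q+1), by omega, by omega, by omega⟩)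
  have hcomm : Commute g z := by
    ext x
    simp only [Equiv.Perm.mul_apply]
    rcases hcases x with h | ⟨h1, h2⟩ | ⟨i, h1, h2, rfl⟩
    · rw [hzout x h, hout x h, hzout x h]
    · have hb := baseStep_mem q x hq h1 h2
      rw [hzlow x h1 h2, hhigh x h1 h2, hlow x h1 h2]
      split_ifs
      · rw [hzlow _ hb.1 hb.2]
      · rw [hzhigh _ hb.1 hb.2]
    · have hb := baseStep_mem q i hq h1 h2
      rw [hzhigh i h1 h2, hhigh i h1 h2, hlow i h1 h2]
      split_ifs
      · rw [hzhigh _ hb.1 hb.2]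
      · rw [hzlow _ hb.1 hb.2]
  have hstep : ∀ k, k < 2*q+1 → g (orb q k) = orb q (k+1) := by
    intro k hk
    by_cases hr : orb q k ≤ 2*q+1
    · rw [hlow _ (by unfold orb; grind) hr]
      exact (orb_step_low q k _ hq hk rfl hr).symm
    · obtain ⟨i, hi⟩ : ∃ i, orb q k = i + (2*q+1) := ⟨orb q k - (2*q+1), by omega⟩
      have hi2 : i ≤ 2*q+1 := by unfold orb at hi; grind
      rw [hi, hhigh i (by omega) hi2]
      exact (orb_step_high q k i hq hk hi (by omega)).symm
  have horb : ∀ k, k ≤ 2*q+1 → (g ^ k) 1 = orb q k := by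
    intro k
    induction k with
    | zero => intro _; simp [orb]
    | succ k ih =>
      intro hk
      rw [pow_succ', Equiv.Perm.mul_apply, ih (by omega), hstep k (by omega)]
  have hn1 : (g ^ (2*q+1)) 1 = z 1 := by
    rw [horb _ le_rfl, hzlow 1 le_rfl (by omega)]
    unfold orb
    grind
  have key : ∀ k, (g ^ (2*q+1)) ((g ^ k) 1) = z ((g ^ k) 1) := by
    intro k
    rw [← Equiv.Perm.mul_apply, ← pow_add, add_comm, pow_add, Equiv.Perm.mul_apply, hn1,
      ← Equiv.Perm.mul_apply, (hcomm.pow_left k).eq, Equiv.Perm.mul_apply]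
  have hinv : ∀ x, (g ^ (2*q+1)) x = z x → (g ^ (2*q+1)) (z x) = z (z x) := by
    intro x hx
    rw [← Equiv.Perm.mul_apply, (hcomm.pow_left _).eq, Equiv.Perm.mul_apply, hx]
  have hsurj : ∀ i, 1 ≤ i → i ≤ 2*q+1 →
      ∃ k, k ≤ 2*q+1 ∧ (orb q k = i ∨ orb q k = i + (2*q+1)) := by
    intro i h1 h2
    have hc : i = 1 ∨ i = 2 ∨ i = 4 ∨ (3 ≤ i ∧ i % 2 = 1) ∨ (6 ≤ i ∧ i % 2 = 0) := by omega
    rcases hc with h | h | h | h | h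
    · exact ⟨0, by omega, by unfold orb; grind⟩
    · exact ⟨2*q-1, by omega, by unfold orb; grind⟩
    · exact ⟨2*q, by omega, by unfold orb; grind⟩
    · refine ⟨(2*(2*q+1)-3-i)/2, by omega, ?_⟩
      unfold orb; grind
    · refine ⟨(i-4)/2, by omega, ?_⟩
      unfold orb; grind
  have hboth : ∀ i, 1 ≤ i → i ≤ 2*q+1 → (g ^ (2*q+1)) i = z i ∧
      (g ^ (2*q+1)) (i + (2*q+1)) = z (i + (2*q+1)) := by
    intro i h1 h2
    obtain ⟨k, hk, h⟩ := hsurj i h1 h2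
    have hk' := key k
    rw [horb k hk] at hk'
    rcases h with h | h
    · rw [h] at hk'
      have := hinv _ hk'
      rw [hzlow i h1 h2] at this
      exact ⟨hk', this⟩
    · rw [h] at hk'
      have := hinv _ hk'
      rw [hzhigh i h1 h2] at this
      exact ⟨this, hk'⟩
  ext x
  rcases hcases x with h | ⟨h1, h2⟩ | ⟨i, h1, h2, rfl⟩
  · rw [hzout x h]
    exact Equiv.Perm.pow_apply_eq_self_of_apply_eq_self (hout x h) _
  · exact (hboth x h1 h2).1
  · exact (hboth i h1 h2).2
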